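/- Bounded Difference of Left-hand Trace Sizes: Let P be a cyclic proof satisfying the conditions finitely progressing, dynamic, and balanced with respect to a node ν and trace values τ ∈ TraceVals_𝒜(ν) and τ' ∈ TraceVals_𝒞(ν), and let τ⃗_{1..n} and τ⃗'_{1..n} be left-hand traces rooted at ν (i.e. with τ⃗_1 and τ⃗'_1 trace values of ν reachable from (ν,τ)) following some path ν⃗_{1..n} in P. Then |Θ_ν⃗(τ⃗) − Θ_ν⃗(τ⃗')| ≤ C(P)·maxStep(P); in particular both sizes are finite ordinals (natural numbers) and their difference is a well-defined integer bounded in absolute value by C(P)·maxStep(P). -/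

import Mathlib

noncomputable section

/-- We work with ordinals in universe 0. -/
abbrev Ordl : Type 1 := Ordinal.{0}

/-- Reverse ordinal sum: `revSum d k = d (k-1) + ⋯ + d 0` (and `0` for `k = 0`). -/
def revSum (d : ℕ → Ordl) : ℕ → Ordl
  | 0 => 0
  | k + 1 => d k + revSum d k

/-- An abstract entailment system: antecedents, consequents, models, the two
satisfaction relations, and finite sets of trace values for antecedents and
consequents (drawn from the disjoint types `TA` and `TC`). -/
structure CES where
  A : Type
  C : Type
  M : Type
  TA : Type
  TC : Type
  satA : M → A → Prop
  satC : M → C → Prop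
  tvA : A → Finset TA
  tvC : C → Finset TC

/-- Validity of a sequent `A ⊢ C`: every model of the antecedent satisfies the consequent. -/
def CES.Valid (S : CES) (s : S.A × S.C) : Prop :=
  ∀ m : S.M, S.satA m s.1 → S.satC m s.2

/-- A cyclic pre-proof: a finite directed graph whose nodes carry sequents and
(ordered) lists of children, together with the trace pair functions `δ1` (on
antecedent trace values) and `δ2` (on consequent trace values) attached to the
rule instance at each node/premise.  `δ1`/`δ2` are partial (Option-valued) and
only defined along edges, on trace values of the respective sequents. -/
structure PreProof (S : CES) where
  Node : Type
  [fintypeNode : Fintype Node]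
  [decEqNode : DecidableEq Node]
  seqOf : Node → S.A × S.C
  children : Node → List Node
  δ1 : Node → Node → S.TA → S.TA → Option Ordl
  δ2 : Node → Node → S.TC → S.TC → Option Ordl
  δ1_dom : ∀ ν ν' τ τ', (δ1 ν ν' τ τ').isSome →
    ν' ∈ children ν ∧ τ ∈ S.tvA (seqOf ν).1 ∧ τ' ∈ S.tvA (seqOf ν').1
  δ2_dom : ∀ ν ν' τ τ', (δ2 ν ν' τ τ').isSome →
    ν' ∈ children ν ∧ τ ∈ S.tvC (seqOf ν).2 ∧ τ' ∈ S.tvC (seqOf ν').2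

attribute [instance] PreProof.fintypeNode PreProof.decEqNode

/-- An ordinal trace function: partial ordinal-valued functions on
(antecedent resp. consequent) trace value/model pairs, defined at least on all
`(τ, m)` with `τ ∈ tvA A` and `m ⊨ A`. -/
structure OTF (S : CES) where
  OA : S.TA → S.M → Option Ordl
  OC : S.TC → S.M → Option Ordl
  definedA : ∀ (a : S.A) (τ : S.TA) (m : S.M),
    τ ∈ S.tvA a → S.satA m a → (OA τ m).isSome

/-- `1̲`: the least value taken by the ordinal trace function. -/
def OTF.leastVal {S : CES} (O : OTF S) : Ordl :=
  sInf {o : Ordl | (∃ τ m, O.OA τ m = some o) ∨ (∃ τ m, O.OC τ m = some o)}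

/-- A sequent `s` equates trace values `τa` and `τc`: whenever `s` is valid,
every model of the antecedent realizing `τc` realizes `τa` with the same size. -/
def OTF.Equates {S : CES} (O : OTF S) (s : S.A × S.C) (τa : S.TA) (τc : S.TC) : Prop :=
  S.Valid s → ∀ m : S.M, S.satA m s.1 →
    ∀ o : Ordl, O.OC τc m = some o → O.OA τa m = some o

namespace PreProof

variable {S : CES}

/-- A node is axiomatic when its rule instance has no premises. -/
def Axiomatic (P : PreProof S) (ν : P.Node) : Prop := P.children ν = []

/-- `νs 0, …, νs (n-1)` is a (finite) path in the pre-proof. -/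
def IsPath (P : PreProof S) (n : ℕ) (νs : ℕ → P.Node) : Prop :=
  ∀ i, i + 1 < n → νs (i + 1) ∈ P.children (νs i)

/-- An infinite path in the pre-proof. -/
def InfPath (P : PreProof S) (νs : ℕ → P.Node) : Prop :=
  ∀ i, νs (i + 1) ∈ P.children (νs i)

/-- A left-hand trace `τs 0, …, τs (k-1)` follows (an initial segment of) the
path `νs 0, …, νs (n-1)`. -/
def FollowsL (P : PreProof S) (n : ℕ) (νs : ℕ → P.Node) (k : ℕ) (τs : ℕ → S.TA) : Prop :=
  k ≤ n ∧ (∀ i < k, τs i ∈ S.tvA (P.seqOf (νs i)).1) ∧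
    ∀ i, i + 1 < k → (P.δ1 (νs i) (νs (i + 1)) (τs i) (τs (i + 1))).isSome

/-- A right-hand trace `τs 0, …, τs (k-1)` follows (an initial segment of) the
path `νs 0, …, νs (n-1)`. -/
def FollowsR (P : PreProof S) (n : ℕ) (νs : ℕ → P.Node) (k : ℕ) (τs : ℕ → S.TC) : Prop :=
  k ≤ n ∧ (∀ i < k, τs i ∈ S.tvC (P.seqOf (νs i)).2) ∧
    ∀ i, i + 1 < k → (P.δ2 (νs i) (νs (i + 1)) (τs i) (τs (i + 1))).isSome

/-- The `δ1`-value of the `i`-th step of a left-hand trace along a path. -/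
def stepL (P : PreProof S) (νs : ℕ → P.Node) (τs : ℕ → S.TA) (i : ℕ) : Ordl :=
  (P.δ1 (νs i) (νs (i + 1)) (τs i) (τs (i + 1))).getD 0

/-- The `δ2`-value of the `i`-th step of a right-hand trace along a path. -/
def stepR (P : PreProof S) (νs : ℕ → P.Node) (τs : ℕ → S.TC) (i : ℕ) : Ordl :=
  (P.δ2 (νs i) (νs (i + 1)) (τs i) (τs (i + 1))).getD 0

/-- Size `Θ` of a left-hand trace of length `k` along a path: the *reverse*
ordinal sum `δ1(τ_{k-2},τ_{k-1}) + ⋯ + δ1(τ_0,τ_1)`. -/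
def thetaL (P : PreProof S) (νs : ℕ → P.Node) (τs : ℕ → S.TA) (k : ℕ) : Ordl :=
  revSum (P.stepL νs τs) (k - 1)

/-- Size `Θ` of a right-hand trace of length `k` along a path (reverse sum). -/
def thetaR (P : PreProof S) (νs : ℕ → P.Node) (τs : ℕ → S.TC) (k : ℕ) : Ordl :=
  revSum (P.stepR νs τs) (k - 1)

/-- The global soundness condition: every infinite path has a tail followed by
an infinitely progressing left-hand trace. -/
def GlobalSound (P : PreProof S) : Prop :=
  ∀ νs : ℕ → P.Node, P.InfPath νs →
    ∃ (k : ℕ) (τs : ℕ → S.TA),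
      (∀ i, (P.δ1 (νs (k + i)) (νs (k + i + 1)) (τs i) (τs (i + 1))).isSome) ∧
      ∀ N, ∃ i, N ≤ i ∧
        ∃ α : Ordl, P.δ1 (νs (k + i)) (νs (k + i + 1)) (τs i) (τs (i + 1)) = some α ∧ 0 < α

/-- A (valid) cyclic proof: a pre-proof satisfying the global soundness
condition; consequently (and we record it as part of the notion) all sequents
occurring in it are valid. -/
def IsCyclicProof (P : PreProof S) : Prop :=
  P.GlobalSound ∧ ∀ ν : P.Node, S.Valid (P.seqOf ν)

/-- The descending counter-model property of an ordinal trace function. -/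
def DCM (P : PreProof S) (O : OTF S) : Prop :=
  ∀ (ν : P.Node) (m : S.M),
    S.satA m (P.seqOf ν).1 → ¬ S.satC m (P.seqOf ν).2 →
    ∃ ν' ∈ P.children ν, ∃ m' : S.M,
      S.satA m' (P.seqOf ν').1 ∧ ¬ S.satC m' (P.seqOf ν').2 ∧
      ∀ (τ τ' : S.TA) (α : Ordl), P.δ1 ν ν' τ τ' = some α →
        ∀ o : Ordl, O.OA τ m = some o →
          ∃ o' : Ordl, O.OA τ' m' = some o' ∧ o' + α ≤ o

/-- A right-hand trace value is terminal for a node when it has no successor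
trace value towards any premise. -/
def TerminalR (P : PreProof S) (ν : P.Node) (σ : S.TC) : Prop :=
  ∀ ν' ∈ P.children ν, ∀ σ', P.δ2 ν ν' σ σ' = none

/-- Defining property of the exclusion predicate: a rule instance (node)
excludes a consequent trace value only if no model of the antecedent realizes
it. -/
def ExclOK (P : PreProof S) (O : OTF S) (Excl : P.Node → S.TC → Prop) : Prop :=
  ∀ (ν : P.Node) (σ : S.TC), Excl ν σ →
    ∀ m : S.M, S.satA m (P.seqOf ν).1 → O.OC σ m = none

/-- A consequent trace value is ground w.r.t. a node: if the node's sequent is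
valid then the value is realized only with the least possible size. -/
def Ground (P : PreProof S) (O : OTF S) (ν : P.Node) (σ : S.TC) : Prop :=
  S.Valid (P.seqOf ν) → ∀ m : S.M, S.satA m (P.seqOf ν).1 →
    ∀ o : Ordl, O.OC σ m = some o → o = O.leastVal

/-- The trace value ordering relation `τ2 ∼^ν_P τ1` (`∼` is `<` when
`strict = true` and `≤` otherwise). -/
def TVO (P : PreProof S) (O : OTF S) (Excl : P.Node → S.TC → Prop) (strict : Bool)
    (ν0 : P.Node) (τ1 : S.TA) (τ2 : S.TC) : Prop :=
  ∀ (n : ℕ) (νs : ℕ → P.Node) (τs : ℕ → S.TC),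
    1 ≤ n → P.IsPath n νs → νs 0 = ν0 → τs 0 = τ2 →
    P.FollowsR n νs n τs →
    P.TerminalR (νs (n - 1)) (τs (n - 1)) →
    ¬ Excl (νs (n - 1)) (τs (n - 1)) →
    ∃ (k : ℕ) (τs' : ℕ → S.TA),
      1 ≤ k ∧ k ≤ n ∧ τs' 0 = τ1 ∧ P.FollowsL n νs k τs' ∧
      (if strict then P.thetaR νs τs n < P.thetaL νs τs' k
        else P.thetaR νs τs n ≤ P.thetaL νs τs' k) ∧
      (P.Ground O (νs (n - 1)) (τs (n - 1)) ∨
        (P.Axiomatic (νs (n - 1)) ∧ k = n ∧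
          O.Equates (P.seqOf (νs (n - 1))) (τs' (n - 1)) (τs (n - 1))))

/-- The descending model property of an ordinal trace function. -/
def DMP (P : PreProof S) (O : OTF S) : Prop :=
  ∀ ν : P.Node, P.children ν ≠ [] →
    S.Valid (P.seqOf ν) → (∀ ν' ∈ P.children ν, S.Valid (P.seqOf ν')) →
    ∀ τ1 ∈ S.tvA (P.seqOf ν).1, ∀ τ2 ∈ S.tvC (P.seqOf ν).2,
    ∀ m : S.M, S.satA m (P.seqOf ν).1 →
    ∃ ν' ∈ P.children ν, ∃ m' : S.M,
      S.satA m' (P.seqOf ν').1 ∧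
      (P.TerminalR ν τ2 ∨ ∃ σ', (P.δ2 ν ν' τ2 σ').isSome) ∧
      (∀ (σ' : S.TA) (α : Ordl), P.δ1 ν ν' τ1 σ' = some α →
        ∀ o : Ordl, O.OA τ1 m = some o →
          ∃ o' : Ordl, O.OA σ' m' = some o' ∧ o' + α ≤ o) ∧
      (∀ (σ' : S.TC) (α : Ordl), P.δ2 ν ν' τ2 σ' = some α →
        ∀ o : Ordl, O.OC τ2 m = some o →
          ∃ o' : Ordl, O.OC σ' m' = some o' ∧ o ≤ o' + α)

/-- A sequence of models supports a left-hand trace along a path. -/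
def SupportsL (P : PreProof S) (O : OTF S) (n : ℕ) (νs : ℕ → P.Node) (k : ℕ)
    (τs : ℕ → S.TA) (ms : ℕ → S.M) : Prop :=
  P.FollowsL n νs k τs ∧
    (∀ i < k, S.satA (ms i) (P.seqOf (νs i)).1 ∧ (O.OA (τs i) (ms i)).isSome) ∧
    ∀ j, j + 1 < k → ∀ o o' : Ordl, O.OA (τs j) (ms j) = some o →
      O.OA (τs (j + 1)) (ms (j + 1)) = some o' →
      o' + P.stepL νs τs j ≤ o

/-- A sequence of models supports a right-hand trace along a path. -/
def SupportsR (P : PreProof S) (O : OTF S) (n : ℕ) (νs : ℕ → P.Node) (k : ℕ)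
    (τs : ℕ → S.TC) (ms : ℕ → S.M) : Prop :=
  P.FollowsR n νs k τs ∧
    (∀ i < k, S.satC (ms i) (P.seqOf (νs i)).2 ∧ (O.OC (τs i) (ms i)).isSome) ∧
    ∀ j, j + 1 < k → ∀ o o' : Ordl, O.OC (τs j) (ms j) = some o →
      O.OC (τs (j + 1)) (ms (j + 1)) = some o' →
      o ≤ o' + P.stepR νs τs j

/-- `(ν', τ')` is reachable from `(ν, τ)` on the left. -/
def ReachL (P : PreProof S) (ν : P.Node) (τ : S.TA) (ν' : P.Node) (τ' : S.TA) : Prop :=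
  ∃ (n : ℕ) (νs : ℕ → P.Node) (τs : ℕ → S.TA),
    1 ≤ n ∧ P.IsPath n νs ∧ P.FollowsL n νs n τs ∧
    νs 0 = ν ∧ τs 0 = τ ∧ νs (n - 1) = ν' ∧ τs (n - 1) = τ'

/-- `(ν', τ')` is reachable from `(ν, τ)` on the right. -/
def ReachR (P : PreProof S) (ν : P.Node) (τ : S.TC) (ν' : P.Node) (τ' : S.TC) : Prop :=
  ∃ (n : ℕ) (νs : ℕ → P.Node) (τs : ℕ → S.TC),
    1 ≤ n ∧ P.IsPath n νs ∧ P.FollowsR n νs n τs ∧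
    νs 0 = ν ∧ τs 0 = τ ∧ νs (n - 1) = ν' ∧ τs (n - 1) = τ'

/-- A left cycle along a path. -/
def IsCycleL (P : PreProof S) (n : ℕ) (νs : ℕ → P.Node) (τs : ℕ → S.TA) : Prop :=
  2 ≤ n ∧ P.IsPath n νs ∧ P.FollowsL n νs n τs ∧ νs (n - 1) = νs 0 ∧ τs (n - 1) = τs 0

/-- A right cycle along a path. -/
def IsCycleR (P : PreProof S) (n : ℕ) (νs : ℕ → P.Node) (τs : ℕ → S.TC) : Prop :=
  2 ≤ n ∧ P.IsPath n νs ∧ P.FollowsR n νs n τs ∧ νs (n - 1) = νs 0 ∧ τs (n - 1) = τs 0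

/-- A simple left cycle. -/
def IsSimpleCycleL (P : PreProof S) (n : ℕ) (νs : ℕ → P.Node) (τs : ℕ → S.TA) : Prop :=
  P.IsCycleL n νs τs ∧
    ∀ i j, 1 ≤ i → i < j → j ≤ n - 1 → ¬ (νs i = νs j ∧ τs i = τs j)

/-- A simple right cycle. -/
def IsSimpleCycleR (P : PreProof S) (n : ℕ) (νs : ℕ → P.Node) (τs : ℕ → S.TC) : Prop :=
  P.IsCycleR n νs τs ∧
    ∀ i j, 1 ≤ i → i < j → j ≤ n - 1 → ¬ (νs i = νs j ∧ τs i = τs j)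

/-- A simple left binary cycle. -/
def IsSimpleBinCycleL (P : PreProof S) (n : ℕ) (νs : ℕ → P.Node)
    (τs τs' : ℕ → S.TA) : Prop :=
  P.IsCycleL n νs τs ∧ P.IsCycleL n νs τs' ∧
    ∀ i j, 1 ≤ i → i < j → j ≤ n - 1 →
      ¬ (νs i = νs j ∧ τs i = τs j ∧ τs' i = τs' j)

/-- `P` is left finitely progressing w.r.t. `(ν0, τ0)`. -/
def FinProgL (P : PreProof S) (ν0 : P.Node) (τ0 : S.TA) : Prop :=
  ∀ (ν1 ν2 : P.Node) (τ1 τ2 : S.TA) (α : Ordl),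
    P.ReachL ν0 τ0 ν1 τ1 → P.δ1 ν1 ν2 τ1 τ2 = some α → α < Ordinal.omega0

/-- `P` is right finitely progressing w.r.t. `(ν0, τ0)`. -/
def FinProgR (P : PreProof S) (ν0 : P.Node) (τ0 : S.TC) : Prop :=
  ∀ (ν1 ν2 : P.Node) (τ1 τ2 : S.TC) (α : Ordl),
    P.ReachR ν0 τ0 ν1 τ1 → P.δ2 ν1 ν2 τ1 τ2 = some α → α < Ordinal.omega0

/-- `P` is dynamic w.r.t. `ν0`, `τA`, `τC`: every reachable left or right
simple cycle has strictly positive size. -/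
def Dynamic (P : PreProof S) (ν0 : P.Node) (τA : S.TA) (τC : S.TC) : Prop :=
  (∀ (n : ℕ) (νs : ℕ → P.Node) (τs : ℕ → S.TA), P.IsSimpleCycleL n νs τs →
    P.ReachL ν0 τA (νs 0) (τs 0) → 0 < P.thetaL νs τs n) ∧
  (∀ (n : ℕ) (νs : ℕ → P.Node) (τs : ℕ → S.TC), P.IsSimpleCycleR n νs τs →
    P.ReachR ν0 τC (νs 0) (τs 0) → 0 < P.thetaR νs τs n)

/-- `P` is balanced w.r.t. `(ν0, τA)`: the two components of every reachable
simple left binary cycle have equal size. -/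
def Balanced (P : PreProof S) (ν0 : P.Node) (τA : S.TA) : Prop :=
  ∀ (n : ℕ) (νs : ℕ → P.Node) (τs τs' : ℕ → S.TA), P.IsSimpleBinCycleL n νs τs τs' →
    P.ReachL ν0 τA (νs 0) (τs 0) → P.ReachL ν0 τA (νs 0) (τs' 0) →
    P.thetaL νs τs n = P.thetaL νs τs' n

/-- The trace width `W(P)`. -/
def traceWidth (P : PreProof S) : ℕ :=
  Finset.univ.sup fun ν : P.Node =>
    max (S.tvA (P.seqOf ν).1).card (S.tvC (P.seqOf ν).2).card

/-- The (binary left-hand) cycle threshold `C(P)`: the number of triples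
`(σ, σ', μ)` with `σ, σ' ∈ TraceVals_A(μ)`. -/
def cycThreshold (P : PreProof S) : ℕ :=
  ∑ ν : P.Node, (S.tvA (P.seqOf ν).1).card * (S.tvA (P.seqOf ν).1).card

/-- `maxStep(P)`: the maximum (finite) `δ1`-value over the edges of `P`. -/
def maxStepN (P : PreProof S) : ℕ :=
  sSup {k : ℕ | ∃ ν ν' τ τ', P.δ1 ν ν' τ τ' = some (k : Ordl)}

/-- The in-degree of the proof graph. -/
def inDeg (P : PreProof S) : ℕ :=
  Finset.univ.sup fun ν' : P.Node =>
    (Finset.univ.filter fun ν : P.Node => ν' ∈ P.children ν).card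

/-- The trace pair function of `P` is trace injective. -/
def TraceInjective (P : PreProof S) : Prop :=
  (∀ (ν ν' : P.Node) (τ τ' τ'' : S.TA),
    (P.δ1 ν ν' τ τ'').isSome → (P.δ1 ν ν' τ' τ'').isSome → τ = τ') ∧
  (∀ (ν ν' : P.Node) (σ σ' σ'' : S.TC),
    (P.δ2 ν ν' σ σ'').isSome → (P.δ2 ν ν' σ' σ'').isSome → σ = σ')

/-- `T_ν(σ)`: the set of antecedent trace values of `ν` equated to `σ`
by the sequent of `ν`. -/
def Tset (P : PreProof S) (O : OTF S) (ν : P.Node) (σ : S.TC) : Set S.TA :=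
  {τ : S.TA | τ ∈ S.tvA (P.seqOf ν).1 ∧ O.Equates (P.seqOf ν) τ σ}

end PreProof

/-! ### Weighted automata over the ordinal max-plus semiring -/

/-- The alphabet `Σ_P`. -/
abbrev Sig {S : CES} (P : PreProof S) : Type := P.Node ⊕ (Set S.TA × S.TC)

/-- States of the antecedent automata (`⊤ⁱ_μ` states are used only by the
approximate automata). -/
inductive AState (Node TA : Type) : Type
  | init : AState Node TA
  | pair : Node → TA → AState Node TA
  | bot : AState Node TA
  | top : AState Node TA
  | topn : Node → ℕ → AState Node TA

instance {Node TA : Type} : Inhabited (AState Node TA) := ⟨AState.init⟩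

/-- States of the consequent automaton. -/
inductive BState (Node TC : Type) : Type
  | init : BState Node TC
  | pair : Node → TC → BState Node TC
  | bot : BState Node TC

instance {Node TC : Type} : Inhabited (BState Node TC) := ⟨BState.init⟩

/-- Transition relation of the (full) antecedent automaton `𝒜^{(P,ν0)}_{(τ1,·)}`. -/
inductive ATrans {S : CES} (P : PreProof S) (O : OTF S) (ν0 : P.Node) (τ1 : S.TA) :
    AState P.Node S.TA → Sig P → AState P.Node S.TA → Prop
  | start : ATrans P O ν0 τ1 .init (Sum.inl ν0) (.pair ν0 τ1)
  | step {μ μ' : P.Node} {σ σ' : S.TA} (h1 : μ' ∈ P.children μ)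
      (h2 : (P.δ1 μ μ' σ σ').isSome) :
      ATrans P O ν0 τ1 (.pair μ σ) (Sum.inl μ') (.pair μ' σ')
  | toBot {μ : P.Node} {σ : S.TA} {σ' : S.TC} (h1 : P.Axiomatic μ)
      (h2 : σ' ∈ S.tvC (P.seqOf μ).2) (h3 : σ ∈ P.Tset O μ σ') :
      ATrans P O ν0 τ1 (.pair μ σ) (Sum.inr (P.Tset O μ σ', σ')) .bot
  | toTop {μ μ' : P.Node} {σ : S.TA} (h : μ' ∈ P.children μ) :
      ATrans P O ν0 τ1 (.pair μ σ) (Sum.inl μ') .top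
  | topLoop (μ : P.Node) : ATrans P O ν0 τ1 .top (Sum.inl μ) .top

/-- Transition relation of the approximate antecedent automaton `𝒜(n)^{(P,ν0)}_{(τ1,·)}`. -/
inductive ATransN {S : CES} (P : PreProof S) (O : OTF S) (n : ℕ) (ν0 : P.Node) (τ1 : S.TA) :
    AState P.Node S.TA → Sig P → AState P.Node S.TA → Prop
  | start : ATransN P O n ν0 τ1 .init (Sum.inl ν0) (.pair ν0 τ1)
  | step {μ μ' : P.Node} {σ σ' : S.TA} (h1 : μ' ∈ P.children μ)
      (h2 : (P.δ1 μ μ' σ σ').isSome) :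
      ATransN P O n ν0 τ1 (.pair μ σ) (Sum.inl μ') (.pair μ' σ')
  | toBot {μ : P.Node} {σ : S.TA} {σ' : S.TC} (h1 : P.Axiomatic μ)
      (h2 : σ' ∈ S.tvC (P.seqOf μ).2) (h3 : σ ∈ P.Tset O μ σ') :
      ATransN P O n ν0 τ1 (.pair μ σ) (Sum.inr (P.Tset O μ σ', σ')) .bot
  | toTopn {μ μ' : P.Node} {σ : S.TA} (h : μ' ∈ P.children μ) :
      ATransN P O n ν0 τ1 (.pair μ σ) (Sum.inl μ') (.topn μ' 1)
  | topnStay {μ μ' : P.Node} {i : ℕ} (h1 : 0 < i) (h2 : i ≤ n) (h3 : μ' ≠ μ) :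
      ATransN P O n ν0 τ1 (.topn μ i) (Sum.inl μ') (.topn μ i)
  | topnStep {μ : P.Node} {i : ℕ} (h1 : 0 < i) (h2 : i < n) :
      ATransN P O n ν0 τ1 (.topn μ i) (Sum.inl μ) (.topn μ (i + 1))

/-- Transition relation of the consequent automaton `ℬ^{(P,ν0)}_{(·,τ2)}`. -/
inductive BTrans {S : CES} (P : PreProof S) (O : OTF S) (Excl : P.Node → S.TC → Prop)
    (ν0 : P.Node) (τ2 : S.TC) :
    BState P.Node S.TC → Sig P → BState P.Node S.TC → Prop
  | start : BTrans P O Excl ν0 τ2 .init (Sum.inl ν0) (.pair ν0 τ2)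
  | step {μ μ' : P.Node} {σ σ' : S.TC} (h1 : μ' ∈ P.children μ)
      (h2 : (P.δ2 μ μ' σ σ').isSome) :
      BTrans P O Excl ν0 τ2 (.pair μ σ) (Sum.inl μ') (.pair μ' σ')
  | toBot {μ : P.Node} {σ : S.TC} (h1 : P.Axiomatic μ) (h2 : σ ∈ S.tvC (P.seqOf μ).2)
      (h3 : ¬ P.Ground O μ σ) (h4 : ¬ Excl μ σ) :
      BTrans P O Excl ν0 τ2 (.pair μ σ) (Sum.inr (P.Tset O μ σ, σ)) .bot

/-- Weight function of the antecedent automata (the only potentially non-zero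
weights sit on pair-to-pair transitions, where they are given by `δ1`). -/
def Awt {S : CES} (P : PreProof S) :
    AState P.Node S.TA → Sig P → AState P.Node S.TA → Ordl
  | .pair μ σ, _, .pair μ' σ' => (P.δ1 μ μ' σ σ').getD 0
  | _, _, _ => 0

/-- Weight function of the consequent automaton. -/
def Bwt {S : CES} (P : PreProof S) :
    BState P.Node S.TC → Sig P → BState P.Node S.TC → Ordl
  | .pair μ σ, _, .pair μ' σ' => (P.δ2 μ μ' σ σ').getD 0
  | _, _, _ => 0

/-- `q` is a run over the word `σ 0, …, σ (m-1)` (from the initial state `q0`). -/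
def IsRun {Q A : Type*} (T : Q → A → Q → Prop) (q0 : Q) (m : ℕ) (σ : ℕ → A)
    (q : ℕ → Q) : Prop :=
  q 0 = q0 ∧ ∀ i < m, T (q i) (σ i) (q (i + 1))

/-- The value of a run: the `⊗`-product (i.e. reverse ordinal sum) of the
weights of its transitions. -/
def runVal {Q A : Type*} (wt : Q → A → Q → Ordl) (m : ℕ) (σ : ℕ → A) (q : ℕ → Q) : Ordl :=
  revSum (fun i => wt (q i) (σ i) (q (i + 1))) m

/-- The quantitative language of a weighted automaton: `⊥` (i.e. `none`) if the
word admits no accepting run, and otherwise the supremum (maximum) of the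
values of its accepting runs. -/
def Lang {Q A : Type*} (T : Q → A → Q → Prop) (q0 : Q) (F : Q → Prop)
    (wt : Q → A → Q → Ordl) (m : ℕ) (σ : ℕ → A) : Option Ordl := by
  classical
  exact if (∃ q : ℕ → Q, IsRun T q0 m σ q ∧ F (q m)) then
    some (sSup {v : Ordl | ∃ q : ℕ → Q, IsRun T q0 m σ q ∧ F (q m) ∧ v = runVal wt m σ q})
  else none

/-- Ordering of quantitative language values, with `⊥ = none` below everything. -/
def OptLE : Option Ordl → Option Ordl → Prop
  | none, _ => True
  | some _, none => False
  | some a, some b => a ≤ b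

/-- Strict ordering of quantitative language values on defined (non-`⊥`) values. -/
def OptLT : Option Ordl → Option Ordl → Prop
  | none, _ => True
  | some _, none => False
  | some a, some b => a < b

/-- `∼` on language values: `<` when `strict`, else `≤`. -/
def OptOrd (strict : Bool) : Option Ordl → Option Ordl → Prop :=
  fun x y => if strict then OptLT x y else OptLE x y

/-- Final states of the antecedent automata: all non-initial states. -/
def AFinal {Node TA : Type} : AState Node TA → Prop := fun q => q ≠ .init

/-- Final states of the consequent automaton. -/
def BFinal {S : CES} (P : PreProof S) (O : OTF S) (Excl : P.Node → S.TC → Prop) :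
    BState P.Node S.TC → Prop
  | .init => False
  | .bot => True
  | .pair μ σ => ¬ Excl μ σ ∧
      ((¬ P.Axiomatic μ ∧ P.TerminalR μ σ) ∨ (P.Axiomatic μ ∧ P.Ground O μ σ))

/-- The quantitative language of `𝒜^{(P,ν0)}_{(τ1,τ2)}` (it does not depend on `τ2`). -/
def LangA {S : CES} (P : PreProof S) (O : OTF S) (ν0 : P.Node) (τ1 : S.TA) :
    ℕ → (ℕ → Sig P) → Option Ordl :=
  Lang (ATrans P O ν0 τ1) .init AFinal (Awt P)

/-- The quantitative language of `𝒜(n)^{(P,ν0)}_{(τ1,τ2)}`. -/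
def LangAN {S : CES} (P : PreProof S) (O : OTF S) (n : ℕ) (ν0 : P.Node) (τ1 : S.TA) :
    ℕ → (ℕ → Sig P) → Option Ordl :=
  Lang (ATransN P O n ν0 τ1) .init AFinal (Awt P)

/-- The quantitative language of `ℬ^{(P,ν0)}_{(τ1,τ2)}` (it does not depend on `τ1`). -/
def LangB {S : CES} (P : PreProof S) (O : OTF S) (Excl : P.Node → S.TC → Prop)
    (ν0 : P.Node) (τ2 : S.TC) : ℕ → (ℕ → Sig P) → Option Ordl :=
  Lang (BTrans P O Excl ν0 τ2) .init (BFinal P O Excl) (Bwt P)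

/-- The automaton `ℬ^{(P,ν0)}_{(·,τ2)}` is grounded: every reachable final pair
state carries a trace value that is ground w.r.t. its node. -/
def BGrounded {S : CES} (P : PreProof S) (O : OTF S) (Excl : P.Node → S.TC → Prop)
    (ν0 : P.Node) (τ2 : S.TC) : Prop :=
  ∀ (μ : P.Node) (σ : S.TC),
    (∃ (m : ℕ) (w : ℕ → Sig P) (q : ℕ → BState P.Node S.TC),
      IsRun (BTrans P O Excl ν0 τ2) .init m w q ∧ q m = .pair μ σ ∧
        BFinal P O Excl (.pair μ σ)) →
    P.Ground O μ σ

/-- Collapse the graded sink states of an approximate automaton onto `⊤`. -/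
def collapseTop {Node TA : Type} : AState Node TA → AState Node TA
  | .topn _ _ => .top
  | q => q

/-- The number of occurrences of the letter `a` among `σ lo, …, σ (hi - 1)`. -/
def cnt {A : Type*} (σ : ℕ → A) (a : A) (lo hi : ℕ) : ℕ := by
  classical
  exact ((Finset.Ico lo hi).filter fun t => σ t = a).card

/-- The set of runs (as lists of states) of an automaton on a word. -/
def RunsOn {Q A : Type*} [Inhabited Q] (T : Q → A → Q → Prop) (q0 : Q)
    (w : List A) : Set (List Q) :=
  {l : List Q | l.length = w.length + 1 ∧ l.getD 0 default = q0 ∧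
    ∀ i, ∀ h : i < w.length, T (l.getD i default) (w.get ⟨i, h⟩) (l.getD (i + 1) default)}

end

/-!
Run the two traces simultaneously, as a walk through the triples `(μ, σ, σ')` with
`σ, σ' ∈ TraceVals_𝒜(μ)`, and weigh each step by the difference of its two `δ1`-values, which is at
most `maxStep(P)` in absolute value. A walk with more than `C(P)` steps visits a triple twice, hence
contains a simple cycle. The two components of that cycle have equal size because `P` is balanced,
so cutting the cycle out does not change the weight of the walk. Repeating this leaves a walk with
at most `C(P)` steps.
-/

section Walk

variable {Q G : Type*} {E : Q → Q → Prop} {w : Q → Q → G} {x : ℕ → Q} {i d r n : ℕ}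

/-- `x 0, …, x n` is a walk with `n` steps in the directed graph with edge relation `E`. The values
of `x` beyond index `n` are irrelevant. -/
def IsWalk (E : Q → Q → Prop) (n : ℕ) (x : ℕ → Q) : Prop :=
  ∀ k < n, E (x k) (x (k + 1))

/-- A simple cycle: a nonempty closed walk whose only repetition is that of its base point at the
two ends. Injectivity is stated from index `1` on because `x 0 = x n`. -/
structure IsSimpleClosedWalk (E : Q → Q → Prop) (n : ℕ) (x : ℕ → Q) : Prop where
  pos : 0 < n
  isWalk : IsWalk E n x
  closed : x n = x 0
  injOn : Set.InjOn x (Set.Icc 1 n)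

/-- The total weight of the first `n` steps of `x`, where `w` weighs the single steps. -/
def walkWeight [AddCommMonoid G] (w : Q → Q → G) (n : ℕ) (x : ℕ → Q) : G :=
  ∑ k ∈ Finset.range n, w (x k) (x (k + 1))

/-- The walk `x` with the `d` steps after index `i` cut out; it is meant for `x (i + d) = x i`. -/
def excise (x : ℕ → Q) (i d : ℕ) : ℕ → Q :=
  fun k => if k ≤ i then x k else x (k + d)

theorem excise_of_le {k : ℕ} (hk : k ≤ i) : excise x i d k = x k :=
  if_pos hk

theorem excise_of_ge (hclosed : x (i + d) = x i) {k : ℕ} (hk : i ≤ k) :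
    excise x i d k = x (k + d) := by
  rcases hk.eq_or_lt with rfl | hlt
  · rw [excise_of_le le_rfl, hclosed]
  · exact if_neg hlt.not_ge

theorem IsWalk.excise (hx : IsWalk E (i + d + r) x) (hclosed : x (i + d) = x i) :
    IsWalk E (i + r) (excise x i d) := by
  intro k hk
  rcases lt_or_ge k i with hki | hik
  · rw [excise_of_le hki.le, excise_of_le hki]
    exact hx k (by lia)
  · rw [excise_of_ge hclosed hik, excise_of_ge hclosed (by lia), Nat.add_right_comm]
    exact hx (k + d) (by lia)

theorem walkWeight_add [AddCommMonoid G] (w : Q → Q → G) (m n : ℕ) (x : ℕ → Q) :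
    walkWeight w (m + n) x = walkWeight w m x + walkWeight w n fun k => x (m + k) :=
  Finset.sum_range_add _ m n

theorem walkWeight_congr [AddCommMonoid G] {y : ℕ → Q} (h : ∀ k ≤ n, x k = y k) :
    walkWeight w n x = walkWeight w n y :=
  Finset.sum_congr rfl fun k hk => by
    rw [h k (Finset.mem_range.1 hk).le, h (k + 1) (Finset.mem_range.1 hk)]

theorem walkWeight_eq_excise_add [AddCommMonoid G] (hclosed : x (i + d) = x i) :
    walkWeight w (i + d + r) x =
      walkWeight w (i + r) (excise x i d) + walkWeight w d fun k => x (i + k) := by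
  have hbefore : walkWeight w i (excise x i d) = walkWeight w i x :=
    walkWeight_congr fun _ hk => excise_of_le hk
  have hafter : (walkWeight w r fun k => excise x i d (i + k)) =
      walkWeight w r fun k => x (i + d + k) :=
    walkWeight_congr fun k _ => by
      rw [excise_of_ge hclosed (Nat.le_add_right i k), Nat.add_right_comm]
  rw [walkWeight_add, walkWeight_add, walkWeight_add, hbefore, hafter, add_right_comm]

theorem exists_repetition_of_card_lt {F : Finset Q} (hF : ∀ k < n, x k ∈ F) (hn : F.card < n) :
    ∃ d i, 0 < d ∧ i + d < n ∧ x (i + d) = x i := by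
  obtain ⟨a, ha, b, hb, hne, hab⟩ := Finset.exists_ne_map_eq_of_card_lt_of_maps_to
    (by rwa [Finset.card_range]) (fun k hk => hF k (Finset.mem_range.1 hk))
  rw [Finset.mem_range] at ha hb
  rcases hne.lt_or_gt with hlt | hlt <;> obtain ⟨d, rfl⟩ := Nat.exists_eq_add_of_lt hlt
  · exact ⟨d + 1, a, d.succ_pos, hb, hab.symm⟩
  · exact ⟨d + 1, b, d.succ_pos, ha, hab⟩

theorem IsWalk.exists_isSimpleClosedWalk (hx : IsWalk E n x) {F : Finset Q}
    (hF : ∀ k < n, x k ∈ F) (hn : F.card < n) :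
    ∃ i d, i + d < n ∧ IsSimpleClosedWalk E d fun k => x (i + k) := by
  classical
  -- A shortest closed segment is simple.
  have hrep := exists_repetition_of_card_lt hF hn
  obtain ⟨i, hpos, hlt, hclosed⟩ := Nat.find_spec hrep
  refine ⟨i, Nat.find hrep, hlt, hpos, fun k hk => hx (i + k) (by lia), hclosed, ?_⟩
  have hne : ∀ a b, 1 ≤ a → a < b → b ≤ Nat.find hrep → x (i + a) ≠ x (i + b) := by
    intro a b ha hab hb heq
    refine Nat.find_min hrep (m := b - a) (by lia) ⟨i + a, by lia, by lia, ?_⟩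
    rw [heq, Nat.add_assoc, Nat.add_sub_cancel' hab.le]
  intro a ha b hb heq
  rcases lt_trichotomy a b with hab | hab | hab
  · exact (hne a b ha.1 hab hb.2 heq).elim
  · exact hab
  · exact (hne b a hb.1 hab ha.2 heq.symm).elim

section Bound

variable [AddCommGroup G] [LinearOrder G] [IsOrderedAddMonoid G] {M : G}

theorem IsWalk.abs_walkWeight_le_nsmul (hx : IsWalk E n x) (hw : ∀ q r, E q r → |w q r| ≤ M) :
    |walkWeight w n x| ≤ n • M :=
  calc |walkWeight w n x|
      ≤ ∑ k ∈ Finset.range n, |w (x k) (x (k + 1))| := Finset.abs_sum_le_sum_abs _ _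
    _ ≤ (Finset.range n).card • M :=
        Finset.sum_le_card_nsmul _ _ _ fun k hk => hw _ _ (hx k (Finset.mem_range.1 hk))
    _ = n • M := by rw [Finset.card_range]

theorem IsWalk.abs_walkWeight_le (hx : IsWalk E n x) {F : Finset Q} (hF : ∀ q r, E q r → q ∈ F)
    (hM : 0 ≤ M) (hw : ∀ q r, E q r → |w q r| ≤ M)
    (hcycle : ∀ m y, IsSimpleClosedWalk E m y → walkWeight w m y = 0) :
    |walkWeight w n x| ≤ F.card • M := by
  induction n using Nat.strong_induction_on generalizing x with
  | _ n ih =>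
    rcases le_or_gt n F.card with hn | hn
    · exact (hx.abs_walkWeight_le_nsmul hw).trans (nsmul_le_nsmul_left hM hn)
    · obtain ⟨i, d, hid, hsimple⟩ :=
        hx.exists_isSimpleClosedWalk (fun k hk => hF _ _ (hx k hk)) hn
      obtain ⟨r, rfl⟩ := Nat.exists_eq_add_of_le hid.le
      rw [walkWeight_eq_excise_add hsimple.closed, hcycle d _ hsimple, add_zero]
      exact ih (i + r) (by have := hsimple.pos; lia) (hx.excise hsimple.closed)

end Bound

end Walk

theorem revSum_eq_natCast_sum {d : ℕ → Ordl} {f : ℕ → ℕ} {n : ℕ}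
    (h : ∀ k < n, d k = (f k : Ordl)) :
    revSum d n = ((∑ k ∈ Finset.range n, f k : ℕ) : Ordl) := by
  induction n with
  | zero => exact Nat.cast_zero.symm
  | succ n ih =>
    rw [revSum, ih fun k hk => h k (by lia), h n n.lt_succ_self, ← Nat.cast_add,
      Finset.sum_range_succ, add_comm]

namespace PreProof

variable {S : CES} {P : PreProof S} {ν μ μ' : P.Node} {τ σ σ' : S.TA} {n m : ℕ}
  {νs : ℕ → P.Node} {τs : ℕ → S.TA}

theorem FollowsL.isPath (hf : P.FollowsL n νs n τs) : P.IsPath n νs :=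
  fun i hi => (P.δ1_dom _ _ _ _ (hf.2.2 i hi)).1

theorem followsL_of_isSome_δ1 (hm : 0 < m)
    (hstep : ∀ i < m, (P.δ1 (νs i) (νs (i + 1)) (τs i) (τs (i + 1))).isSome) :
    P.FollowsL (m + 1) νs (m + 1) τs := by
  refine ⟨le_rfl, fun i hi => ?_, fun i hi => hstep i (Nat.lt_of_succ_lt_succ hi)⟩
  rcases Nat.lt_succ_iff_lt_or_eq.1 hi with hlt | rfl
  · exact (P.δ1_dom _ _ _ _ (hstep i hlt)).2.1
  · obtain ⟨j, rfl⟩ := Nat.exists_eq_add_one.2 hm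
    exact (P.δ1_dom _ _ _ _ (hstep j j.lt_succ_self)).2.2

theorem isCycleL_of_isSome_δ1 (hm : 0 < m)
    (hstep : ∀ i < m, (P.δ1 (νs i) (νs (i + 1)) (τs i) (τs (i + 1))).isSome)
    (hν : νs m = νs 0) (hτ : τs m = τs 0) : P.IsCycleL (m + 1) νs τs :=
  have hf := followsL_of_isSome_δ1 hm hstep
  ⟨Nat.succ_le_succ hm, hf.isPath, hf, hν, hτ⟩

theorem ReachL.step (h : P.ReachL ν τ μ σ) (hs : (P.δ1 μ μ' σ σ').isSome) :
    P.ReachL ν τ μ' σ' := by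
  obtain ⟨n, νs, τs, hn, -, hf, rfl, rfl, rfl, rfl⟩ := h
  obtain ⟨m, rfl⟩ := Nat.exists_eq_add_one.2 hn
  have hf' : P.FollowsL (m + 2) (Function.update νs (m + 1) μ') (m + 2)
      (Function.update τs (m + 1) σ') := by
    refine followsL_of_isSome_δ1 m.succ_pos fun i hi => ?_
    rcases Nat.lt_succ_iff_lt_or_eq.1 hi with hlt | rfl
    · simpa only [Function.update_of_ne hi.ne, Function.update_of_ne (Nat.succ_lt_succ hlt).ne]
        using hf.2.2 i (Nat.succ_lt_succ hlt)
    · simpa only [Function.update_self, Function.update_of_ne hi.ne, Nat.add_sub_cancel] using hs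
  exact ⟨m + 2, _, _, by lia, hf'.isPath, hf', Function.update_of_ne (by lia) _ _,
    Function.update_of_ne (by lia) _ _, Function.update_self .., Function.update_self ..⟩

theorem FollowsL.reachL {k i : ℕ} (hf : P.FollowsL n νs k τs) (h0 : P.ReachL ν τ (νs 0) (τs 0))
    (hi : i < k) : P.ReachL ν τ (νs i) (τs i) := by
  induction i with
  | zero => exact h0
  | succ i ih => exact (ih (by lia)).step (hf.2.2 i hi)

/-- The `δ1`-value of a trace pair as a natural number. It is the intended one only where that value
is defined and finite, and `0` elsewhere. -/
noncomputable def stepSize (P : PreProof S) (μ μ' : P.Node) (σ σ' : S.TA) : ℕ :=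
  Cardinal.toNat ((P.δ1 μ μ' σ σ').getD 0).card

theorem stepSize_eq_of_δ1_eq_some {k : ℕ} (h : P.δ1 μ μ' σ σ' = some (k : Ordl)) :
    P.stepSize μ μ' σ σ' = k := by
  rw [stepSize, h, Option.getD_some, Ordinal.card_nat, Cardinal.toNat_natCast]

theorem FinProgL.δ1_eq_some_stepSize (hfp : P.FinProgL ν τ) (h : P.ReachL ν τ μ σ)
    (hs : (P.δ1 μ μ' σ σ').isSome) : P.δ1 μ μ' σ σ' = some (P.stepSize μ μ' σ σ' : Ordl) := by
  obtain ⟨α, hα⟩ := Option.isSome_iff_exists.1 hs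
  obtain ⟨k, rfl⟩ := Ordinal.lt_omega0.1 (hfp μ μ' σ σ' α h hα)
  rw [stepSize_eq_of_δ1_eq_some hα, hα]

theorem bddAbove_finite_δ1_values (P : PreProof S) :
    BddAbove {k : ℕ | ∃ ν ν' τ τ', P.δ1 ν ν' τ τ' = some (k : Ordl)} := by
  let T : Set S.TA := ⋃ ν, S.tvA (P.seqOf ν).1
  have hT : T.Finite := Set.finite_iUnion fun _ => Finset.finite_toSet _
  have hfinite := (Set.finite_univ (α := P.Node × P.Node)).prod (hT.prod hT)
  refine ((hfinite.image fun p => P.stepSize p.1.1 p.1.2 p.2.1 p.2.2).subset ?_).bddAbove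
  rintro k ⟨μ, μ', σ, σ', h⟩
  obtain ⟨-, hσ, hσ'⟩ := P.δ1_dom μ μ' σ σ' (h ▸ rfl)
  exact ⟨((μ, μ'), σ, σ'), ⟨trivial, Set.mem_iUnion.2 ⟨μ, hσ⟩, Set.mem_iUnion.2 ⟨μ', hσ'⟩⟩,
    stepSize_eq_of_δ1_eq_some h⟩

theorem FinProgL.stepSize_le_maxStepN (hfp : P.FinProgL ν τ) (h : P.ReachL ν τ μ σ)
    (hs : (P.δ1 μ μ' σ σ').isSome) : P.stepSize μ μ' σ σ' ≤ P.maxStepN :=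
  le_csSup P.bddAbove_finite_δ1_values ⟨μ, μ', σ, σ', hfp.δ1_eq_some_stepSize h hs⟩

/-- The size of the first `m` steps of a trace, as a natural number: the finite counterpart of
`thetaL`, which counts trace values instead of steps. -/
noncomputable def traceSize (P : PreProof S) (νs : ℕ → P.Node) (τs : ℕ → S.TA) (m : ℕ) : ℕ :=
  ∑ i ∈ Finset.range m, P.stepSize (νs i) (νs (i + 1)) (τs i) (τs (i + 1))

theorem FinProgL.thetaL_eq_traceSize (hfp : P.FinProgL ν τ) (hf : P.FollowsL n νs n τs)
    (h0 : P.ReachL ν τ (νs 0) (τs 0)) :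
    P.thetaL νs τs n = (P.traceSize νs τs (n - 1) : Ordl) :=
  revSum_eq_natCast_sum fun i hi => by
    rw [stepL, hfp.δ1_eq_some_stepSize (hf.reachL h0 (by lia)) (hf.2.2 i (by lia)),
      Option.getD_some]

/-- The triples `(μ, σ, σ')` of a node and two trace values that are counted by `C(P)`. -/
def traceValuePairs (P : PreProof S) : Finset ((_ : P.Node) × S.TA × S.TA) :=
  Finset.univ.sigma fun μ => S.tvA (P.seqOf μ).1 ×ˢ S.tvA (P.seqOf μ).1

theorem card_traceValuePairs (P : PreProof S) : P.traceValuePairs.card = P.cycThreshold := by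
  simp only [traceValuePairs, cycThreshold, Finset.card_sigma, Finset.card_product]

/-- A simultaneous step of two left-hand traces along a common edge, from trace values reachable
from `(ν, τ)`. -/
structure PairStep (P : PreProof S) (ν : P.Node) (τ : S.TA) (q r : (_ : P.Node) × S.TA × S.TA) :
    Prop where
  reach_fst : P.ReachL ν τ q.1 q.2.1
  reach_snd : P.ReachL ν τ q.1 q.2.2
  step_fst : (P.δ1 q.1 r.1 q.2.1 r.2.1).isSome
  step_snd : (P.δ1 q.1 r.1 q.2.2 r.2.2).isSome

/-- The amount by which the first trace grows more than the second in a simultaneous step. -/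
noncomputable def stepDiff (P : PreProof S) (q r : (_ : P.Node) × S.TA × S.TA) : ℤ :=
  P.stepSize q.1 r.1 q.2.1 r.2.1 - P.stepSize q.1 r.1 q.2.2 r.2.2

section PairStep

variable {q r : (_ : P.Node) × S.TA × S.TA} {y : ℕ → (_ : P.Node) × S.TA × S.TA}

theorem PairStep.mem_traceValuePairs (h : P.PairStep ν τ q r) : q ∈ P.traceValuePairs :=
  Finset.mem_sigma.2 ⟨Finset.mem_univ _, Finset.mem_product.2
    ⟨(P.δ1_dom _ _ _ _ h.step_fst).2.1, (P.δ1_dom _ _ _ _ h.step_snd).2.1⟩⟩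

theorem FinProgL.abs_stepDiff_le_maxStepN (hfp : P.FinProgL ν τ) (h : P.PairStep ν τ q r) :
    |P.stepDiff q r| ≤ P.maxStepN := by
  have hfst := hfp.stepSize_le_maxStepN h.reach_fst h.step_fst
  have hsnd := hfp.stepSize_le_maxStepN h.reach_snd h.step_snd
  rw [stepDiff, abs_le]
  lia

theorem walkWeight_stepDiff (P : PreProof S) (m : ℕ) (y : ℕ → (_ : P.Node) × S.TA × S.TA) :
    walkWeight P.stepDiff m y =
      P.traceSize (fun i => (y i).1) (fun i => (y i).2.1) m -
        P.traceSize (fun i => (y i).1) (fun i => (y i).2.2) m := by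
  simp only [walkWeight, stepDiff, traceSize, Finset.sum_sub_distrib, Nat.cast_sum]

theorem isSimpleBinCycleL_of_isSimpleClosedWalk (hy : IsSimpleClosedWalk (P.PairStep ν τ) m y) :
    P.IsSimpleBinCycleL (m + 1) (fun i => (y i).1) (fun i => (y i).2.1) (fun i => (y i).2.2) := by
  have hν : (y m).1 = (y 0).1 := congrArg (·.1) hy.closed
  refine ⟨isCycleL_of_isSome_δ1 hy.pos (fun i hi => (hy.isWalk i hi).step_fst) hν
      (congrArg (·.2.1) hy.closed),
    isCycleL_of_isSome_δ1 hy.pos (fun i hi => (hy.isWalk i hi).step_snd) hν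
      (congrArg (·.2.2) hy.closed), ?_⟩
  rintro i j hi hij hj ⟨hν, hfst, hsnd⟩
  have heq : y i = y j := Sigma.ext hν (heq_of_eq (Prod.ext hfst hsnd))
  exact hij.ne (hy.injOn ⟨hi, hij.le.trans hj⟩ ⟨hi.trans hij.le, hj⟩ heq)

theorem Balanced.walkWeight_stepDiff_eq_zero (hbal : P.Balanced ν τ) (hfp : P.FinProgL ν τ)
    (hy : IsSimpleClosedWalk (P.PairStep ν τ) m y) : walkWeight P.stepDiff m y = 0 := by
  have hcycle := isSimpleBinCycleL_of_isSimpleClosedWalk hy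
  have ⟨⟨_, _, hf, _⟩, ⟨_, _, hf', _⟩, _⟩ := hcycle
  have hstart := hy.isWalk 0 hy.pos
  have hsizes := hbal _ _ _ _ hcycle hstart.reach_fst hstart.reach_snd
  rw [hfp.thetaL_eq_traceSize hf hstart.reach_fst, hfp.thetaL_eq_traceSize hf' hstart.reach_snd,
    Nat.cast_inj, Nat.add_sub_cancel] at hsizes
  rw [walkWeight_stepDiff, hsizes, sub_self]

theorem isWalk_pairStep {τs' : ℕ → S.TA} (hf : P.FollowsL n νs n τs)
    (hf' : P.FollowsL n νs n τs') (hr : P.ReachL ν τ (νs 0) (τs 0))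
    (hr' : P.ReachL ν τ (νs 0) (τs' 0)) :
    IsWalk (P.PairStep ν τ) (n - 1) fun i => ⟨νs i, τs i, τs' i⟩ :=
  fun i hi => ⟨hf.reachL hr (by lia), hf'.reachL hr' (by lia), hf.2.2 i (by lia),
    hf'.2.2 i (by lia)⟩

end PairStep

end PreProof

theorem bounded_difference_of_lefthand_trace_sizes_general
    {S : CES} {P : PreProof S} {ν : P.Node} {τ : S.TA}
    (hfp : P.FinProgL ν τ) (hbal : P.Balanced ν τ)
    {n : ℕ} {νs : ℕ → P.Node} {τs τs' : ℕ → S.TA}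
    (hf : P.FollowsL n νs n τs) (hf' : P.FollowsL n νs n τs')
    (hr : P.ReachL ν τ (νs 0) (τs 0)) (hr' : P.ReachL ν τ (νs 0) (τs' 0)) :
    ∃ a b : ℕ, P.thetaL νs τs n = (a : Ordl) ∧ P.thetaL νs τs' n = (b : Ordl) ∧
      ((a : ℤ) - (b : ℤ)).natAbs ≤ P.cycThreshold * P.maxStepN := by
  refine ⟨_, _, hfp.thetaL_eq_traceSize hf hr, hfp.thetaL_eq_traceSize hf' hr', ?_⟩
  have hbound := (PreProof.isWalk_pairStep hf hf' hr hr').abs_walkWeight_le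
    (fun _ _ => PreProof.PairStep.mem_traceValuePairs) (Nat.cast_nonneg P.maxStepN)
    (fun _ _ => hfp.abs_stepDiff_le_maxStepN)
    (fun _ _ => hbal.walkWeight_stepDiff_eq_zero hfp)
  rw [PreProof.walkWeight_stepDiff, PreProof.card_traceValuePairs, nsmul_eq_mul] at hbound
  zify
  exact hbound

/-- **Bounded Difference of Left-hand Trace Sizes.**
Let the cyclic proof `P` be finitely progressing, dynamic and balanced with
respect to `ν`, `τ ∈ TraceVals_𝒜(ν)` and `τ' ∈ TraceVals_𝒞(ν)`, and let
`τs`, `τs'` be left-hand traces of length `n` rooted at `ν` (their initial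
values being reachable from `(ν, τ)`) following a path `νs` in `P`.  Then
both trace sizes are finite ordinals (natural numbers `a`, `b`) and
`|a - b| ≤ C(P)·maxStep(P)`. -/
theorem bounded_difference_of_lefthand_trace_sizes
    (S : CES) (P : PreProof S) (O : OTF S)
    (hproof : P.IsCyclicProof)
    (ν : P.Node) (τ : S.TA) (τ' : S.TC)
    (hτ : τ ∈ S.tvA (P.seqOf ν).1) (hτ' : τ' ∈ S.tvC (P.seqOf ν).2)
    (hfpL : P.FinProgL ν τ) (hfpR : P.FinProgR ν τ')
    (hdyn : P.Dynamic ν τ τ') (hbal : P.Balanced ν τ)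
    (n : ℕ) (hn : 1 ≤ n) (νs : ℕ → P.Node) (hpath : P.IsPath n νs) (hroot : νs 0 = ν)
    (τs τs' : ℕ → S.TA)
    (hf : P.FollowsL n νs n τs) (hf' : P.FollowsL n νs n τs')
    (hr : P.ReachL ν τ (νs 0) (τs 0)) (hr' : P.ReachL ν τ (νs 0) (τs' 0)) :
    ∃ a b : ℕ, P.thetaL νs τs n = (a : Ordl) ∧ P.thetaL νs τs' n = (b : Ordl) ∧
      ((a : ℤ) - (b : ℤ)).natAbs ≤ P.cycThreshold * P.maxStepN := by
  exact bounded_difference_of_lefthand_trace_sizes_general hfpL hbal hf hf' hr hr'
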